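/- In the model Y = Xβ* + ξ with p ≥ n and k* ≤ c·n for an absolute constant c, there exist absolute constants c', c₁, c₂, C > 0 such that with probability at least 1 − c₁e^{−c₂n}, the minimum ℓ2-norm interpolator β̂ satisfies ‖Σ^{1/2}(β̂ − β*)‖₂² ≤ C·max( ‖β*‖₂²·r_{c'n}(Σ)/n , ‖ξ‖₂²/n ). -/

import Mathlib

open MeasureTheory ProbabilityTheory Matrix Finset
open scoped ENNReal Classical

noncomputable section

/-- Euclidean (`ℓ2`) norm of a finite real vector. -/
def enorm2 {m : ℕ} (v : Fin m → ℝ) : ℝ := Real.sqrt (∑ i, v i ^ 2)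

/-- The prediction (semi-)norm `‖Σ^{1/2} d‖₂ = √(dᵀ Σ d)`. -/
def predNorm {p : ℕ} (Sig : Matrix (Fin p) (Fin p) ℝ) (d : Fin p → ℝ) : ℝ :=
  Real.sqrt (d ⬝ᵥ Sig.mulVec d)

/-- The standard Gaussian measure `N(0, I_p)` on `ℝ^p`. -/
def stdGaussian (p : ℕ) : Measure (Fin p → ℝ) :=
  Measure.pi fun _ : Fin p => gaussianReal 0 1

/-- `Σ^{1/2} = P Λ^{1/2} Pᵀ` built from the eigendecomposition data. -/
def covHalf (p : ℕ) (lam : ℕ → ℝ) (Porth : Matrix (Fin p) (Fin p) ℝ) :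
    Matrix (Fin p) (Fin p) ℝ :=
  Porth * Matrix.diagonal (fun i : Fin p => Real.sqrt (lam ((i : ℕ) + 1))) * Porthᵀ

/-- The Gaussian law `N(0,Σ)` on `ℝ^p`, realized as the pushforward of `N(0,I_p)`
by `g ↦ Σ^{1/2} g`. -/
def mvGaussian (p : ℕ) (lam : ℕ → ℝ) (Porth : Matrix (Fin p) (Fin p) ℝ) :
    Measure (Fin p → ℝ) :=
  Measure.map (fun g => (covHalf p lam Porth).mulVec g) (stdGaussian p)

/-- `r_k(Σ) = ∑_{i=k}^p λ_i(Σ)` (eigenvalues `1`-indexed). -/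
def rsum (p : ℕ) (lam : ℕ → ℝ) (k : ℕ) : ℝ := ∑ i ∈ Finset.Icc k p, lam i

/-- The set `{k ∈ {1,…,p} : r_k(Σ)/λ_k(Σ) ≥ c₀ n}`. -/
def kstarSet (p : ℕ) (lam : ℕ → ℝ) (c0 : ℝ) (n : ℕ) : Set ℕ :=
  {k | 1 ≤ k ∧ k ≤ p ∧ c0 * n ≤ rsum p lam k / lam k}

/-- `k* = inf { k ∈ {1,…,p} : r_k(Σ)/λ_k(Σ) ≥ c₀ n }`. -/
def kstar (p : ℕ) (lam : ℕ → ℝ) (c0 : ℝ) (n : ℕ) : ℕ := sInf (kstarSet p lam c0 n)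

/-- `ρ = ‖β*‖₂ + 4‖ξ‖₂/√(r_{k*}(Σ))`. -/
def rho (p : ℕ) (lam : ℕ → ℝ) (c0 : ℝ) (n : ℕ) (βstar : Fin p → ℝ) (ξnorm : ℝ) : ℝ :=
  enorm2 βstar + 4 * ξnorm / Real.sqrt (rsum p lam (kstar p lam c0 n))

/-- `r*(η) = inf { r > 0 : ∑ᵢ min(λ_i(Σ), r²) ≤ η n r² }`. -/
def rstar (p n : ℕ) (lam : ℕ → ℝ) (η : ℝ) : ℝ :=
  sInf {r : ℝ | 0 < r ∧ ∑ i : Fin p, min (lam ((i : ℕ) + 1)) (r ^ 2) ≤ η * n * r ^ 2}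

/-- `r̄(γ) = sup { r > 0 : ∑ᵢ min(λ_i(Σ)ρ², r²) ≤ γ ‖ξ‖₂² }`. -/
def rbar (p : ℕ) (lam : ℕ → ℝ) (γ ρ ξnorm : ℝ) : ℝ :=
  sSup {r : ℝ | 0 < r ∧ ∑ i : Fin p, min (lam ((i : ℕ) + 1) * ρ ^ 2) (r ^ 2) ≤ γ * ξnorm ^ 2}

/-- `k̄ = inf { k ≥ k* : r_k(Σ) ≤ (γ/2) r_{k*}(Σ) }`, with `k̄ = p+1` if the set is empty. -/
def kbar (p : ℕ) (lam : ℕ → ℝ) (c0 : ℝ) (n : ℕ) (γ : ℝ) : ℕ :=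
  if _h : {k | kstar p lam c0 n ≤ k ∧
      rsum p lam k ≤ γ / 2 * rsum p lam (kstar p lam c0 n)}.Nonempty
  then sInf {k | kstar p lam c0 n ≤ k ∧
      rsum p lam k ≤ γ / 2 * rsum p lam (kstar p lam c0 n)}
  else p + 1

/-- `b` is a minimum `ℓ2`-norm interpolator for the design `M` and responses `Y`. -/
def IsMinInterp {n p : ℕ} (M : Fin n → Fin p → ℝ) (Y : Fin n → ℝ) (b : Fin p → ℝ) : Prop :=
  (∀ i, ∑ j, M i j * b j = Y i) ∧
    ∀ b' : Fin p → ℝ, (∀ i, ∑ j, M i j * b' j = Y i) → enorm2 b ≤ enorm2 b'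

/-!
Writing the design as a standard Gaussian operator composed with `Σ^{1/2}`, chi-square tail bounds
and a net argument control it outside an event of probability `5 e^{-n/16}`: it is bounded below by
`√n / 4` in the prediction norm on the span of at most `n / 48` leading eigenvectors, bounded
above by a multiple of `√r_{c'n}` on the remaining directions, and its adjoint is bounded below by
`√r_{k*} / 4`.
The last bound provides an interpolant of the noise of norm at most `4‖ξ‖ / √r_{k*}`, so minimality
gives `‖β̂ - β*‖ ≤ 2‖β*‖ + 4‖ξ‖ / √r_{k*}`. Since `X (β̂ - β*) = ξ`, splitting `β̂ - β*` into its
leading and remaining parts then bounds the prediction error, and `r_{c'n} ≤ r_{k*}` absorbs the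
second term.
-/

section Nets

open Metric Module
open scoped NNReal

variable {E F : Type*} [NormedAddCommGroup E] [NormedSpace ℝ E]

lemma card_le_of_isSeparated_of_subset_closedBall [FiniteDimensional ℝ E] {s : Finset E} {ε : ℝ≥0}
    (hε : 0 < ε) (hs : (s : Set E) ⊆ closedBall 0 1) (hsep : IsSeparated ε (s : Set E)) :
    (s.card : ℝ) ≤ (1 + 2 / ε) ^ finrank ℝ E := by
  borelize E
  let μ : Measure E := Measure.addHaar
  have hδ : (0 : ℝ) < ε / 2 := by positivity
  have hρ : (0 : ℝ) < 1 + ε / 2 := by positivity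
  have hdisj : (s : Set E).PairwiseDisjoint fun x => ball x (ε / 2 : ℝ) := fun x hx y hy hxy => by
    refine ball_disjoint_ball ?_
    have hxy : (ε : ℝ≥0∞) < edist x y := hsep hx hy hxy
    rw [edist_nndist, ENNReal.coe_lt_coe, ← NNReal.coe_lt_coe, coe_nndist] at hxy
    rw [add_halves]
    exact hxy.le
  have hsub : ⋃ x ∈ s, ball x (ε / 2 : ℝ) ⊆ ball 0 (1 + ε / 2 : ℝ) :=
    Set.iUnion₂_subset fun x hx => ball_subset_ball' (by linarith [mem_closedBall.1 (hs hx)])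
  have hvol : s.card * ENNReal.ofReal ((ε / 2 : ℝ) ^ finrank ℝ E) * μ (ball 0 1) ≤
      ENNReal.ofReal ((1 + ε / 2 : ℝ) ^ finrank ℝ E) * μ (ball 0 1) :=
    calc
      _ = μ (⋃ x ∈ s, ball x (ε / 2 : ℝ)) := by
        rw [measure_biUnion_finset hdisj fun _ _ => measurableSet_ball]
        simp only [μ.addHaar_ball_of_pos _ hδ, Finset.sum_const, nsmul_eq_mul, mul_assoc]
      _ ≤ μ (ball 0 (1 + ε / 2 : ℝ)) := measure_mono hsub
      _ = _ := μ.addHaar_ball_of_pos _ hρ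
  have hcard := ENNReal.toReal_le_of_le_ofReal (by positivity) <|
    (ENNReal.mul_le_mul_iff_left (measure_ball_pos _ _ one_pos).ne' measure_ball_lt_top.ne).1 hvol
  rw [ENNReal.toReal_mul, ENNReal.toReal_natCast, ENNReal.toReal_ofReal (by positivity),
    ← le_div_iff₀ (by positivity), ← div_pow] at hcard
  exact hcard.trans_eq (by congr 1; field_simp; ring)

lemma exists_finset_isCover_of_subset_closedBall [FiniteDimensional ℝ E] {A : Set E} {ε : ℝ≥0}
    (hε : 0 < ε) (hA : A ⊆ closedBall 0 1) :
    ∃ s : Finset E, ↑s ⊆ A ∧ IsCover ε A s ∧ (s.card : ℝ) ≤ (1 + 2 / ε) ^ finrank ℝ E := by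
  have hcard : ∀ s : Finset E, ↑s ⊆ A → IsSeparated ε (s : Set E) →
      (s.card : ℝ) ≤ (1 + 2 / ε) ^ finrank ℝ E := fun s hs =>
    card_le_of_isSeparated_of_subset_closedBall hε (hs.trans hA)
  have hpack : packingNumber ε A ≤ ⌊(1 + 2 / ε : ℝ) ^ finrank ℝ E⌋₊ := by
    refine iSup₂_le fun C hC => iSup_le fun hsep => ?_
    by_contra! hlt
    obtain ⟨t, htC, ht⟩ := Set.exists_subset_encard_eq (Order.add_one_le_of_lt hlt)
    have htfin : t.Finite := Set.finite_of_encard_eq_coe (by exact_mod_cast ht)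
    lift t to Finset E using htfin
    rw [Set.encard_coe_eq_coe_finsetCard] at ht
    have htcard : t.card = ⌊(1 + 2 / ε : ℝ) ^ finrank ℝ E⌋₊ + 1 := by exact_mod_cast ht
    have hfloor := Nat.le_floor (hcard t (htC.trans hC) (hsep.subset htC))
    lia
  have hne : packingNumber ε A ≠ ⊤ := (hpack.trans_lt (ENat.natCast_lt_top _)).ne
  have hfin : (maximalSeparatedSet ε A).Finite := Set.encard_ne_top_iff.1 <| by
    rwa [encard_maximalSeparatedSet hne]
  refine ⟨hfin.toFinset, ?_, ?_, hcard _ ?_ ?_⟩ <;> rw [hfin.coe_toFinset]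
  exacts [maximalSeparatedSet_subset, isCover_maximalSeparatedSet hne,
    maximalSeparatedSet_subset, isSeparated_maximalSeparatedSet]

variable [NormedAddCommGroup F] [NormedSpace ℝ F] {N : Set E} {ε : ℝ≥0}

lemma exists_norm_map_sub_map_le_of_isCover (hN : IsCover ε (sphere 0 1) N) (A : E →L[ℝ] F) {u : E}
    (hu : ‖u‖ = 1) : ∃ v ∈ N, ‖A u - A v‖ ≤ ‖A‖ * ε := by
  have huN := isCover_iff_subset_iUnion_closedBall.1 hN (mem_sphere_zero_iff_norm.2 hu)
  obtain ⟨v, hv, huv⟩ := Set.mem_iUnion₂.1 huN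
  refine ⟨v, hv, ?_⟩
  rw [← map_sub]
  exact A.le_opNorm_of_le (mem_closedBall_iff_norm.1 huv)

lemma opNorm_le_of_isCover (hN : IsCover ε (sphere 0 1) N) (hε : ε < 1) {A : E →L[ℝ] F} {K : ℝ}
    (hK : 0 ≤ K) (hA : ∀ v ∈ N, ‖A v‖ ≤ K) : ‖A‖ ≤ K / (1 - ε) := by
  have hA' : ‖A‖ ≤ K + ‖A‖ * ε := A.opNorm_le_of_unit_norm (by positivity) fun u hu => by
    obtain ⟨v, hv, huv⟩ := exists_norm_map_sub_map_le_of_isCover hN A hu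
    linarith [norm_le_norm_add_norm_sub' (A u) (A v), hA v hv]
  rw [le_div_iff₀ (sub_pos.2 (by exact_mod_cast hε))]
  linarith

lemma mul_norm_le_norm_map_of_isCover (hN : IsCover ε (sphere 0 1) N) {A : E →L[ℝ] F} {c : ℝ}
    (hA : ∀ v ∈ N, c ≤ ‖A v‖) (x : E) : (c - ‖A‖ * ε) * ‖x‖ ≤ ‖A x‖ := by
  obtain rfl | hx := eq_or_ne x 0
  · simp
  obtain ⟨v, hv, hxv⟩ :=
    exists_norm_map_sub_map_le_of_isCover hN A (norm_smul_inv_norm (𝕜 := ℝ) hx)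
  rw [← le_div_iff₀ (norm_pos_iff.2 hx)]
  have hnorm : ‖A x‖ / ‖x‖ = ‖A ((‖x‖⁻¹ : ℝ) • x)‖ := by
    rw [map_smul, norm_smul, norm_inv, norm_norm, inv_mul_eq_div]
  rw [hnorm]
  linarith [norm_sub_norm_le (A v) (A ((‖x‖⁻¹ : ℝ) • x)), norm_sub_rev (A v) (A ((‖x‖⁻¹ : ℝ) • x)),
    hA v hv, show ‖A ((‖x‖⁻¹ : ℝ) • x) - A v‖ ≤ ‖A‖ * ε from hxv]

variable {Ω : Type*} [MeasurableSpace Ω] {μ : Measure Ω} {T : Ω → E →L[ℝ] F} {q₁ q₂ : ℝ≥0∞}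
  {K c : ℝ}

lemma measure_exists_mem_finset_le {α : Type*} {s : Finset α} {p : α → Ω → Prop}
    (h : ∀ v ∈ s, μ {ω | p v ω} ≤ q₁) : μ {ω | ∃ v ∈ s, p v ω} ≤ s.card * q₁ := by
  calc μ {ω | ∃ v ∈ s, p v ω} = μ (⋃ v ∈ s, {ω | p v ω}) := by congr 1; ext; simp
    _ ≤ ∑ v ∈ s, μ {ω | p v ω} := measure_biUnion_finset_le s _
    _ ≤ s.card * q₁ := (Finset.sum_le_card_nsmul _ _ _ h).trans_eq (nsmul_eq_mul _ _)

variable [FiniteDimensional ℝ E]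

variable (E) in
lemma exists_finset_isCover_sphere : ∃ s : Finset E, ↑s ⊆ sphere (0 : E) 1 ∧
    IsCover (1 / 9) (sphere 0 1) (s : Set E) ∧ s.card ≤ 19 ^ finrank ℝ E := by
  obtain ⟨s, hs, hcover, hcard⟩ := exists_finset_isCover_of_subset_closedBall
    (E := E) (ε := 1 / 9) (by norm_num) sphere_subset_closedBall
  refine ⟨s, hs, hcover, ?_⟩
  norm_num at hcard
  exact_mod_cast hcard

lemma measure_lt_opNorm_le (hK : 0 ≤ K) (h : ∀ u, ‖u‖ = 1 → μ {ω | K < ‖T ω u‖} ≤ q₁) :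
    μ {ω | 9 / 8 * K < ‖T ω‖} ≤ 19 ^ finrank ℝ E * q₁ := by
  obtain ⟨s, hs, hcover, hcard⟩ := exists_finset_isCover_sphere E
  calc μ {ω | 9 / 8 * K < ‖T ω‖}
      ≤ μ {ω | ∃ v ∈ s, K < ‖T ω v‖} := measure_mono fun ω hω => by
        by_contra hcon
        simp only [Set.mem_ofPred_eq, not_exists, not_and, not_lt] at hcon hω
        have hnorm := opNorm_le_of_isCover hcover (by norm_num) hK hcon
        norm_num at hnorm
        linarith
    _ ≤ s.card * q₁ := measure_exists_mem_finset_le fun v hv => h v (by simpa using hs hv)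
    _ ≤ 19 ^ finrank ℝ E * q₁ := by gcongr; exact_mod_cast hcard

lemma measure_exists_norm_lt_le (hK : 0 ≤ K) (hub : ∀ u, ‖u‖ = 1 → μ {ω | K < ‖T ω u‖} ≤ q₁)
    (hlb : ∀ u, ‖u‖ = 1 → μ {ω | ‖T ω u‖ < c} ≤ q₂) :
    μ {ω | ∃ x, ‖T ω x‖ < (c - K / 8) * ‖x‖} ≤ 19 ^ finrank ℝ E * (q₁ + q₂) := by
  obtain ⟨s, hs, hcover, hcard⟩ := exists_finset_isCover_sphere E
  calc μ {ω | ∃ x, ‖T ω x‖ < (c - K / 8) * ‖x‖}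
      ≤ μ ({ω | 9 / 8 * K < ‖T ω‖} ∪ {ω | ∃ v ∈ s, ‖T ω v‖ < c}) := measure_mono fun ω => by
        rintro ⟨x, hx⟩
        by_contra hcon
        simp only [Set.mem_union, Set.mem_ofPred_eq, not_or, not_exists, not_and, not_lt] at hcon
        have hlower := mul_norm_le_norm_map_of_isCover hcover hcon.2 x
        norm_num at hlower
        nlinarith [norm_nonneg x, hcon.1]
    _ ≤ 19 ^ finrank ℝ E * q₁ + s.card * q₂ := (measure_union_le _ _).trans <| add_le_add
        (measure_lt_opNorm_le hK hub)
        (measure_exists_mem_finset_le fun v hv => hlb v (by simpa using hs hv))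
    _ ≤ 19 ^ finrank ℝ E * (q₁ + q₂) := by rw [mul_add]; gcongr; exact_mod_cast hcard

end Nets

section ChiSquare

open Real InnerProductSpace

lemma mgf_sq_gaussianReal {t : ℝ} (ht : t < 1 / 2) :
    mgf (fun x => x ^ 2) (gaussianReal 0 1) t = (√(1 - 2 * t))⁻¹ := by
  have hpos : 0 < 1 - 2 * t := by linarith
  calc mgf (fun x => x ^ 2) (gaussianReal 0 1) t
      = ∫ x, (√(2 * π))⁻¹ * rexp (-(1 / 2 - t) * x ^ 2) := by
        rw [mgf, integral_gaussianReal_eq_integral_smul one_ne_zero]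
        congr with x
        simp only [gaussianPDFReal, smul_eq_mul, NNReal.coe_one, mul_one, sub_zero]
        rw [mul_assoc, ← Real.exp_add]
        congr 2
        ring
    _ = (√(2 * π))⁻¹ * √(2 * π / (1 - 2 * t)) := by
        rw [integral_const_mul, integral_gaussian]
        congr 2
        field_simp
    _ = (√(1 - 2 * t))⁻¹ := by
        rw [Real.sqrt_div (by positivity), div_eq_mul_inv, inv_mul_cancel_left₀ (by positivity)]

lemma inv_sqrt_one_sub_le_exp {x : ℝ} (h0 : 0 ≤ x) (h1 : x ≤ 1 / 4) :
    (√(1 - 2 * x))⁻¹ ≤ rexp (2 * x) := by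
  refine inv_le_of_inv_le₀ (exp_pos _) (le_sqrt_of_sq_le ?_)
  rw [← exp_neg, ← exp_nat_mul, show (2 : ℕ) * -(2 * x) = -(4 * x) by push_cast; ring, exp_neg]
  refine inv_le_of_inv_le₀ (by linarith) ((inv_le_of_inv_le₀ (by positivity) ?_).trans
    (add_one_le_exp (4 * x)))
  rw [inv_le_iff_one_le_mul₀ (by linarith)]
  nlinarith

lemma inv_sqrt_one_add_le_exp {x : ℝ} (h0 : 0 ≤ x) (h1 : x ≤ 1 / 2) :
    (√(1 + 2 * x))⁻¹ ≤ rexp (-(x / 2)) := by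
  rw [exp_neg]
  refine inv_anti₀ (exp_pos _) (le_sqrt_of_sq_le ?_)
  rw [← exp_nat_mul, show (2 : ℕ) * (x / 2) = x by push_cast; ring]
  linarith [abs_le.1 (abs_exp_sub_one_le (x := x) (by rw [abs_le]; constructor <;> linarith)),
    abs_of_nonneg h0]

variable {ι E : Type*} [Fintype ι] [NormedAddCommGroup E] [InnerProductSpace ℝ E]
  [FiniteDimensional ℝ E] [MeasurableSpace E] [BorelSpace E]
  (b : OrthonormalBasis ι ℝ E) {w : ι → ℝ} {S T : ℝ}

lemma mgf_sum_mul_inner_sq_stdGaussian {t : ℝ} (ht : ∀ i, t * w i < 1 / 2) :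
    mgf (fun x => ∑ i, w i * inner ℝ (b i) x ^ 2) (ProbabilityTheory.stdGaussian E) t =
      ∏ i, (√(1 - 2 * (t * w i)))⁻¹ := by
  rw [stdGaussian_eq_map_pi_orthonormalBasis b,
    mgf_map (Measurable.aemeasurable (by fun_prop)) (by fun_prop)]
  have hinner : ∀ x : ι → ℝ, ∀ i, inner ℝ (b i) (∑ j, x j • b j) = x i := fun x i => by
    rw [b.orthonormal.inner_right_fintype]
  calc mgf _ (Measure.pi fun _ : ι => gaussianReal 0 1) t
      = ∫ x : ι → ℝ, ∏ i, rexp (t * w i * x i ^ 2) ∂Measure.pi fun _ => gaussianReal 0 1 := by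
        simp only [mgf, Function.comp_apply, hinner, Finset.mul_sum, Real.exp_sum, mul_assoc]
    _ = ∏ i, mgf (fun x => x ^ 2) (gaussianReal 0 1) (t * w i) :=
        integral_fintype_prod_eq_prod (fun i (x : ℝ) => rexp (t * w i * x ^ 2))
    _ = ∏ i, (√(1 - 2 * (t * w i)))⁻¹ := by simp only [mgf_sq_gaussianReal (ht _)]

lemma integrable_exp_mul_sum_mul_inner_sq_stdGaussian {t : ℝ} (ht : ∀ i, t * w i < 1 / 2) :
    Integrable (fun x => rexp (t * ∑ i, w i * inner ℝ (b i) x ^ 2))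
      (ProbabilityTheory.stdGaussian E) := by
  refine Integrable.of_integral_ne_zero (Eq.trans_ne (mgf_sum_mul_inner_sq_stdGaussian b ht) ?_)
  exact (Finset.prod_pos fun i _ => inv_pos.2 (sqrt_pos.2 (by linarith [ht i]))).ne'

lemma stdGaussian_lt_sum_mul_inner_sq_le (hT : 0 < T) (hw : ∀ i, 0 ≤ w i)
    (hwT : ∀ i, w i * T ≤ S) (hsum : ∑ i, w i ≤ S) :
    ProbabilityTheory.stdGaussian E {x | 4 * S < ∑ i, w i * inner ℝ (b i) x ^ 2} ≤
      ENNReal.ofReal (rexp (-T / 2)) := by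
  obtain rfl | hS := ((Finset.sum_nonneg fun i _ => hw i).trans hsum).eq_or_lt
  · have hw0 : ∀ i, w i = 0 := fun i =>
      le_antisymm (nonpos_of_mul_nonpos_left (hwT i) hT) (hw i)
    simp [hw0]
  set t := T / (4 * S) with ht
  have htw : ∀ i, t * w i ≤ 1 / 4 := fun i => by
    rw [ht, div_mul_eq_mul_div, div_le_iff₀ (by positivity)]
    linarith [hwT i]
  have htw' : ∀ i, t * w i < 1 / 2 := fun i => (htw i).trans_lt (by norm_num)
  refine (measure_mono (Set.ofPred_subset_ofPred.2 fun _ => le_of_lt)).trans ?_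
  rw [← ofReal_measureReal]
  refine ENNReal.ofReal_le_ofReal ?_
  calc _ ≤ rexp (-t * (4 * S)) * ∏ i, (√(1 - 2 * (t * w i)))⁻¹ := by
        rw [← mgf_sum_mul_inner_sq_stdGaussian b htw']
        exact measure_ge_le_exp_mul_mgf _ (by positivity)
          (integrable_exp_mul_sum_mul_inner_sq_stdGaussian b htw')
    _ ≤ rexp (-t * (4 * S)) * ∏ i, rexp (2 * (t * w i)) := by
        gcongr with i
        exact inv_sqrt_one_sub_le_exp (mul_nonneg (by positivity) (hw i)) (htw i)
    _ = rexp (2 * t * ∑ i, w i - 4 * t * S) := by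
        rw [← Real.exp_sum, ← Real.exp_add, Finset.mul_sum]
        congr 1
        simp only [← mul_assoc]
        ring
    _ ≤ rexp (2 * t * S - 4 * t * S) := by gcongr
    _ = rexp (-T / 2) := by rw [ht]; congr 1; field_simp; ring

lemma stdGaussian_sum_mul_inner_sq_lt_le (hS : 0 < S) (hT : 0 < T) (hw : ∀ i, 0 ≤ w i)
    (hwT : ∀ i, w i * T ≤ S) (hsum : S ≤ ∑ i, w i) :
    ProbabilityTheory.stdGaussian E {x | ∑ i, w i * inner ℝ (b i) x ^ 2 < S / 4} ≤
      ENNReal.ofReal (rexp (-T / 8)) := by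
  set t := T / (2 * S) with ht
  have htw0 : ∀ i, 0 ≤ t * w i := fun i => mul_nonneg (by positivity) (hw i)
  have htw : ∀ i, t * w i ≤ 1 / 2 := fun i => by
    rw [ht, div_mul_eq_mul_div, div_le_iff₀ (by positivity)]
    linarith [hwT i]
  have htw' : ∀ i, -t * w i < 1 / 2 := fun i => by linarith [htw0 i]
  refine (measure_mono (Set.ofPred_subset_ofPred.2 fun _ => le_of_lt)).trans ?_
  rw [← ofReal_measureReal]
  refine ENNReal.ofReal_le_ofReal ?_
  calc _ ≤ rexp (- -t * (S / 4)) * ∏ i, (√(1 - 2 * (-t * w i)))⁻¹ := by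
        rw [← mgf_sum_mul_inner_sq_stdGaussian b htw']
        exact measure_le_le_exp_mul_mgf _ (neg_nonpos.2 (by positivity))
          (integrable_exp_mul_sum_mul_inner_sq_stdGaussian b htw')
    _ ≤ rexp (- -t * (S / 4)) * ∏ i, rexp (-(t * w i / 2)) := by
        gcongr with i
        rw [neg_mul, mul_neg, sub_neg_eq_add]
        exact inv_sqrt_one_add_le_exp (htw0 i) (htw i)
    _ = rexp (t * S / 4 - t / 2 * ∑ i, w i) := by
        rw [← Real.exp_sum, ← Real.exp_add, Finset.sum_neg_distrib, Finset.mul_sum]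
        congr 1
        simp only [mul_div_right_comm]
        ring
    _ ≤ rexp (t * S / 4 - t / 2 * S) := by gcongr
    _ = rexp (-T / 8) := by rw [ht]; congr 1; field_simp; ring

end ChiSquare

section Indicators

lemma sum_indicator_sq {ι : Type*} [Fintype ι] (σ : ι → ℝ) (s : Finset ι) :
    ∑ i, (s : Set ι).indicator σ i ^ 2 = ∑ i ∈ s, σ i ^ 2 := by
  simp [Set.indicator_apply, ite_pow]

lemma indicator_sq_mul_le {ι : Type*} {σ : ι → ℝ} {s : Finset ι} {S T : ℝ}
    (hσ : ∀ i ∈ s, σ i ^ 2 * T ≤ S) (hS : 0 ≤ S) (i : ι) :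
    (s : Set ι).indicator σ i ^ 2 * T ≤ S := by
  by_cases hi : i ∈ s <;> simp [hi, hσ, hS]

end Indicators

section DiagonalOperators

open InnerProductSpace

variable {ι E : Type*} [Fintype ι] [NormedAddCommGroup E] [InnerProductSpace ℝ E]

/-- The operator that scales the `i`-th vector of the orthonormal basis `b` by `σ i`. The square
root of the covariance and its spectral truncations are all of this form. -/
def diagOp (b : OrthonormalBasis ι ℝ E) (σ : ι → ℝ) : E →L[ℝ] E :=
  ∑ i, σ i • rankOne ℝ (b i) (b i)

variable (b : OrthonormalBasis ι ℝ E) (σ τ : ι → ℝ)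

lemma diagOp_apply (x : E) : diagOp b σ x = ∑ i, (σ i * inner ℝ (b i) x) • b i := by
  simp [diagOp, smul_smul]

lemma inner_diagOp (i : ι) (x : E) : inner ℝ (b i) (diagOp b σ x) = σ i * inner ℝ (b i) x := by
  rw [diagOp_apply, b.orthonormal.inner_right_fintype]

lemma adjoint_diagOp [CompleteSpace E] : (diagOp b σ).adjoint = diagOp b σ := by
  refine (ContinuousLinearMap.eq_adjoint_iff _ _).2 (fun x y => ?_) |>.symm
  simp only [diagOp_apply, sum_inner, inner_sum, real_inner_smul_left, real_inner_smul_right,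
    real_inner_comm x]
  exact Finset.sum_congr rfl fun i _ => by ring

lemma diagOp_one : diagOp b 1 = ContinuousLinearMap.id ℝ E := by
  ext x
  simp [diagOp_apply, b.sum_repr']

lemma diagOp_diagOp (x : E) : diagOp b σ (diagOp b τ x) = diagOp b (σ * τ) x := by
  simp only [diagOp_apply b (σ * τ), diagOp_apply b σ, inner_diagOp, Pi.mul_apply, mul_assoc]

lemma diagOp_diagOp_indicator_one (s : Set ι) (x : E) :
    diagOp b σ (diagOp b (s.indicator 1) x) = diagOp b (s.indicator σ) x := by
  rw [diagOp_diagOp]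
  congr 2
  ext i
  by_cases hi : i ∈ s <;> simp [hi]

lemma sub_diagOp_indicator_one (s : Set ι) (x : E) :
    x - diagOp b (s.indicator 1) x = diagOp b (sᶜ.indicator 1) x := by
  rw [Set.indicator_compl, diagOp_apply, diagOp_apply, ← b.sum_repr' x]
  simp [sub_smul, sub_mul, b.sum_repr']

lemma norm_diagOp_sq (x : E) : ‖diagOp b σ x‖ ^ 2 = ∑ i, σ i ^ 2 * inner ℝ (b i) x ^ 2 := by
  rw [← b.sum_sq_norm_inner_right]
  simp [inner_diagOp, mul_pow]

lemma diagOp_indicator_mem_span (s : Finset ι) (x : E) :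
    diagOp b ((s : Set ι).indicator σ) x ∈ Submodule.span ℝ (s.image b : Set E) := by
  rw [diagOp_apply]
  refine Submodule.sum_mem _ fun i _ => ?_
  by_cases hi : i ∈ s
  · exact Submodule.smul_mem _ _ (Submodule.subset_span (by simpa using ⟨i, hi, rfl⟩))
  · simp [hi]

variable {σ τ}

lemma norm_diagOp_le_norm_diagOp (h : ∀ i, |σ i| ≤ |τ i|) (x : E) :
    ‖diagOp b σ x‖ ≤ ‖diagOp b τ x‖ := by
  refine le_of_sq_le_sq ?_ (norm_nonneg _)
  rw [norm_diagOp_sq, norm_diagOp_sq]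
  gcongr ∑ i, ?_ * _ with i
  exact sq_le_sq.2 (h i)

lemma norm_diagOp_le {t : ℝ} (ht : 0 ≤ t) (h : ∀ i, |σ i| ≤ t) (x : E) :
    ‖diagOp b σ x‖ ≤ t * ‖x‖ := by
  refine abs_le_of_sq_le_sq' ?_ (by positivity) |>.2
  rw [norm_diagOp_sq, mul_pow, ← b.sum_sq_inner_right x, Finset.mul_sum]
  gcongr ∑ i, ?_ * _ with i
  exact sq_le_sq.2 ((h i).trans (le_abs_self t))

end DiagonalOperators

section GaussianOperators

open Real Module

variable {Ω ι E F : Type*} [MeasurableSpace Ω] {μ : Measure Ω}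
  [Fintype ι] [NormedAddCommGroup E] [InnerProductSpace ℝ E]
  [FiniteDimensional ℝ E] [MeasurableSpace E] [BorelSpace E]
  [NormedAddCommGroup F] [InnerProductSpace ℝ F]
  {Z : Ω → F →L[ℝ] E} {S T : ℝ}

/-- The random operator `Z` sends every unit vector to a standard Gaussian vector. Matrices with
independent standard Gaussian entries have this property, and so do their transposes; no more of
their law is needed. -/
def HasGaussianImages (Z : Ω → F →L[ℝ] E) (μ : Measure Ω) : Prop :=
  ∀ u, ‖u‖ = 1 → HasLaw (fun ω => Z ω u) (ProbabilityTheory.stdGaussian E) μ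

variable (b : OrthonormalBasis ι ℝ E) {σ : ι → ℝ}

lemma HasGaussianImages.measure_lt_norm_diagOp_le (hZ : HasGaussianImages Z μ) (hT : 0 < T)
    (hσT : ∀ i, σ i ^ 2 * T ≤ S) (hsum : ∑ i, σ i ^ 2 ≤ S) {u : F} (hu : ‖u‖ = 1) :
    μ {ω | 2 * √S < ‖diagOp b σ (Z ω u)‖} ≤ ENNReal.ofReal (rexp (-T / 8)) := by
  have hS : 0 ≤ S := (Finset.sum_nonneg fun i _ => sq_nonneg (σ i)).trans hsum
  have hset : {x | 4 * S < ∑ i, σ i ^ 2 * inner ℝ (b i) x ^ 2} =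
      {x | 2 * √S < ‖diagOp b σ x‖} := by
    ext x
    rw [Set.mem_ofPred_eq, Set.mem_ofPred_eq, ← norm_diagOp_sq,
      ← pow_lt_pow_iff_left₀ (by positivity) (norm_nonneg _) two_ne_zero, mul_pow, sq_sqrt hS]
    norm_num
  have hbound := stdGaussian_lt_sum_mul_inner_sq_le b hT (fun i => sq_nonneg (σ i)) hσT hsum
  rw [hset, ← (hZ u hu).map_eq] at hbound
  exact (Measure.le_map_apply (hZ u hu).aemeasurable _).trans <| hbound.trans <|
    ENNReal.ofReal_le_ofReal <| exp_le_exp.2 (by linarith)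

lemma HasGaussianImages.measure_norm_diagOp_lt_le (hZ : HasGaussianImages Z μ) (hT : 0 < T)
    (hS : 0 < S) (hσT : ∀ i, σ i ^ 2 * T ≤ S) (hsum : S ≤ ∑ i, σ i ^ 2) {u : F} (hu : ‖u‖ = 1) :
    μ {ω | ‖diagOp b σ (Z ω u)‖ < √S / 2} ≤ ENNReal.ofReal (rexp (-T / 8)) := by
  have hset : {x | ∑ i, σ i ^ 2 * inner ℝ (b i) x ^ 2 < S / 4} =
      {x | ‖diagOp b σ x‖ < √S / 2} := by
    ext x
    rw [Set.mem_ofPred_eq, Set.mem_ofPred_eq, ← norm_diagOp_sq,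
      ← pow_lt_pow_iff_left₀ (norm_nonneg _) (by positivity) two_ne_zero, div_pow, sq_sqrt hS.le]
    norm_num
  have hbound := stdGaussian_sum_mul_inner_sq_lt_le b hS hT (fun i => sq_nonneg (σ i)) hσT hsum
  rw [hset, ← (hZ u hu).map_eq] at hbound
  exact (Measure.le_map_apply (hZ u hu).aemeasurable _).trans hbound

lemma nineteen_pow_mul_exp_le {d : ℕ} (hd : 48 * d ≤ T) :
    19 ^ d * ENNReal.ofReal (rexp (-T / 8)) ≤ ENNReal.ofReal (rexp (-T / 16)) := by
  have h19 : (19 : ℝ) ≤ rexp 3 := by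
    have h := pow_le_pow_left₀ (by norm_num) exp_one_gt_d9.le 3
    rw [← exp_nat_mul] at h
    norm_num at h ⊢
    linarith
  have hreal : 19 ^ d * rexp (-T / 8) ≤ rexp (-T / 16) :=
    calc 19 ^ d * rexp (-T / 8) ≤ rexp 3 ^ d * rexp (-T / 8) := by gcongr
      _ = rexp (d * 3 + -T / 8) := by rw [← exp_nat_mul, ← exp_add]
      _ ≤ rexp (-T / 16) := by gcongr; linarith
  have hofReal := ENNReal.ofReal_le_ofReal hreal
  rwa [ENNReal.ofReal_mul (by positivity), ENNReal.ofReal_pow (by norm_num),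
    ENNReal.ofReal_ofNat] at hofReal

variable [FiniteDimensional ℝ F]

lemma HasGaussianImages.measure_lt_opNorm_diagOp_comp_le (hZ : HasGaussianImages Z μ) (hT : 0 < T)
    (hd : 48 * finrank ℝ F ≤ T) (hσT : ∀ i, σ i ^ 2 * T ≤ S) (hsum : ∑ i, σ i ^ 2 ≤ S) :
    μ {ω | 9 / 4 * √S < ‖diagOp b σ ∘L Z ω‖} ≤ ENNReal.ofReal (rexp (-T / 16)) := by
  rw [show 9 / 4 * √S = 9 / 8 * (2 * √S) by ring]
  calc μ {ω | 9 / 8 * (2 * √S) < ‖diagOp b σ ∘L Z ω‖}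
      ≤ 19 ^ finrank ℝ F * ENNReal.ofReal (rexp (-T / 8)) := measure_lt_opNorm_le (by positivity)
        fun u hu => hZ.measure_lt_norm_diagOp_le b hT hσT hsum hu
    _ ≤ ENNReal.ofReal (rexp (-T / 16)) := nineteen_pow_mul_exp_le hd

lemma HasGaussianImages.measure_exists_norm_diagOp_lt_le (hZ : HasGaussianImages Z μ) (hT : 0 < T)
    (hS : 0 < S) (hd : 48 * finrank ℝ F ≤ T) (hσT : ∀ i, σ i ^ 2 * T ≤ S)
    (hsum : ∑ i, σ i ^ 2 = S) :
    μ {ω | ∃ u, ‖diagOp b σ (Z ω u)‖ < √S / 4 * ‖u‖} ≤ 2 * ENNReal.ofReal (rexp (-T / 16)) := by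
  rw [show √S / 4 = √S / 2 - 2 * √S / 8 by ring]
  calc μ {ω | ∃ u, ‖diagOp b σ (Z ω u)‖ < (√S / 2 - 2 * √S / 8) * ‖u‖}
      ≤ 19 ^ finrank ℝ F * (ENNReal.ofReal (rexp (-T / 8)) + ENNReal.ofReal (rexp (-T / 8))) :=
        measure_exists_norm_lt_le (T := fun ω => diagOp b σ ∘L Z ω) (by positivity)
          (fun u hu => hZ.measure_lt_norm_diagOp_le b hT hσT hsum.le hu)
          fun u hu => hZ.measure_norm_diagOp_lt_le b hT hS hσT hsum.ge hu
    _ = 2 * (19 ^ finrank ℝ F * ENNReal.ofReal (rexp (-T / 8))) := by ring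
    _ ≤ 2 * ENNReal.ofReal (rexp (-T / 16)) := by gcongr; exact nineteen_pow_mul_exp_le hd

end GaussianOperators

section GaussianArrays

variable {I J : Type*} [Fintype I] [Fintype J]

/-- The linear map `v ↦ (∑ j, x i j * v j)ᵢ` between Euclidean spaces whose matrix has the rows
`x i`. The matrix is a function of two variables because `Matrix` carries no measurable space. -/
def rowOp (x : I → J → ℝ) : EuclideanSpace ℝ J →L[ℝ] EuclideanSpace ℝ I :=
  (toEuclideanLin (of x)).toContinuousLinearMap

lemma rowOp_apply (x : I → J → ℝ) (v : EuclideanSpace ℝ J) (i : I) :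
    rowOp x v i = ∑ j, x i j * v j := rfl

lemma adjoint_rowOp (x : I → J → ℝ) : (rowOp x).adjoint = rowOp (Function.swap x) := by
  refine (ContinuousLinearMap.eq_adjoint_iff _ _).2 (fun u v => ?_) |>.symm
  simp only [PiLp.inner_apply, rowOp_apply, RCLike.inner_apply, conj_trivial, Finset.mul_sum,
    Finset.sum_mul, Function.swap]
  rw [Finset.sum_comm]
  exact Finset.sum_congr rfl fun i _ => Finset.sum_congr rfl fun j _ => by ring

lemma continuous_rowOp_apply (v : EuclideanSpace ℝ J) :
    Continuous fun x : I → J → ℝ => rowOp x v := by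
  refine (PiLp.continuous_toLp 2 _).comp (continuous_pi fun i => ?_)
  change Continuous fun x : I → J → ℝ => ∑ j, x i j * v j
  fun_prop

variable (I J) in
/-- The law of an array of independent standard Gaussian variables. -/
def gaussianArray : Measure (I → J → ℝ) :=
  Measure.pi fun _ => Measure.pi fun _ => gaussianReal 0 1

instance : IsProbabilityMeasure (gaussianArray I J) := by
  unfold gaussianArray; infer_instance

lemma map_swap_gaussianArray :
    (gaussianArray I J).map Function.swap = gaussianArray J I := by
  let swapL : (I → J → ℝ) →L[ℝ] (J → I → ℝ) :=
    ContinuousLinearMap.pi fun j => ContinuousLinearMap.pi fun i => .proj j ∘L .proj i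
  change (gaussianArray I J).map swapL = _
  refine Measure.ext_of_charFunDual ?_
  ext L
  have hsingle (i : I) (j : J) (t : ℝ) :
      swapL (Pi.single i (Pi.single j t)) = Pi.single j (Pi.single i t) := by
    ext j' i'
    change (Pi.single i (Pi.single j t) : I → J → ℝ) i' j' =
      (Pi.single j (Pi.single i t) : J → I → ℝ) j' i'
    by_cases hi : i' = i <;> by_cases hj : j' = j <;> simp [hi, hj]
  simp only [gaussianArray, charFunDual_map, charFunDual_pi]
  rw [Finset.prod_comm]
  refine Finset.prod_congr rfl fun j _ => Finset.prod_congr rfl fun i _ => ?_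
  congr 1
  ext
  exact congrArg L (hsingle i j 1)

lemma map_sum_mul_pi_gaussianReal (v : EuclideanSpace ℝ J) (hv : ‖v‖ = 1) :
    (Measure.pi fun _ : J => gaussianReal 0 1).map (fun x => ∑ j, x j * v j) =
      gaussianReal 0 1 := by
  have hcomp : (fun x : J → ℝ => ∑ j, x j * v j) = innerSL ℝ v ∘ WithLp.toLp 2 := by
    ext x
    simp [PiLp.inner_apply]
  rw [hcomp, ← Measure.map_map (by fun_prop) (by fun_prop), map_pi_eq_stdGaussian,
    IsGaussian.map_eq_gaussianReal, integral_strongDual_stdGaussian, variance_dual_stdGaussian]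
  simp [hv]

lemma hasGaussianImages_rowOp : HasGaussianImages rowOp (gaussianArray I J) := fun v hv => by
  refine ⟨(continuous_rowOp_apply v).measurable.aemeasurable, ?_⟩
  have hrows : (gaussianArray I J).map (fun g i => ∑ j, g i j * v j) =
      Measure.pi fun _ => gaussianReal 0 1 := by
    rw [gaussianArray, Measure.pi_map_pi (f := fun _ (x : J → ℝ) => ∑ j, x j * v j)
      (fun _ => Measurable.aemeasurable (by fun_prop))]
    simp only [map_sum_mul_pi_gaussianReal v hv]
  have hcomp : (fun g : I → J → ℝ => rowOp g v) = WithLp.toLp 2 ∘ fun g i => ∑ j, g i j * v j := rfl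
  rw [hcomp, ← Measure.map_map (by fun_prop) (by fun_prop), hrows, map_pi_eq_stdGaussian]

lemma hasGaussianImages_adjoint_rowOp :
    HasGaussianImages (fun g => (rowOp g).adjoint) (gaussianArray I J) := fun u hu => by
  have hswap : HasLaw Function.swap (gaussianArray J I) (gaussianArray I J) :=
    ⟨Measurable.aemeasurable (by fun_prop), map_swap_gaussianArray⟩
  simp only [adjoint_rowOp]
  exact (hasGaussianImages_rowOp u hu).comp hswap

end GaussianArrays

section MinimumNormInterpolation

open Real ContinuousLinearMap

variable {E F : Type*} [NormedAddCommGroup E] [InnerProductSpace ℝ E] [CompleteSpace E]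
  [NormedAddCommGroup F] [InnerProductSpace ℝ F] [CompleteSpace F]
  {A : E →L[ℝ] F} {D P : E →L[ℝ] E} {a s c t : ℝ}

lemma surjective_comp_adjoint (hc : 0 < c) (hA : ∀ u, c * ‖u‖ ≤ ‖adjoint A u‖) :
    Function.Surjective (A ∘L adjoint A) := by
  let B : F →L[ℝ] F →L[ℝ] ℝ := innerSL ℝ ∘L (A ∘L adjoint A)
  have hB : IsCoercive B := ⟨c ^ 2, by positivity, fun u => by
    calc c ^ 2 * ‖u‖ * ‖u‖ = (c * ‖u‖) ^ 2 := by ring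
      _ ≤ ‖adjoint A u‖ ^ 2 := by gcongr; exact hA u
      _ = B u u := by
        rw [← real_inner_self_eq_norm_sq, adjoint_inner_left, real_inner_comm]
        rfl⟩
  have heq : ⇑(A ∘L adjoint A) = hB.continuousLinearEquivOfBilin :=
    funext fun u => hB.unique_continuousLinearEquivOfBilin fun _ => rfl
  rw [heq]
  exact hB.continuousLinearEquivOfBilin.surjective

lemma exists_apply_eq_and_mul_norm_le (hc : 0 < c) (hA : ∀ u, c * ‖u‖ ≤ ‖adjoint A u‖) (ξ : F) :
    ∃ η, A η = ξ ∧ c * ‖η‖ ≤ ‖ξ‖ := by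
  obtain ⟨u, hu⟩ := surjective_comp_adjoint hc hA ξ
  refine ⟨adjoint A u, hu, ?_⟩
  rcases (norm_nonneg (adjoint A u)).eq_or_lt with h0 | h0
  · simp [← h0]
  refine le_of_mul_le_mul_right ?_ h0
  calc c * ‖adjoint A u‖ * ‖adjoint A u‖ = c * inner ℝ u ξ := by
        rw [mul_assoc, ← real_inner_self_eq_norm_mul_norm, adjoint_inner_left, ← hu,
          ContinuousLinearMap.comp_apply]
    _ ≤ c * (‖u‖ * ‖ξ‖) := by gcongr; exact real_inner_le_norm u ξ
    _ = ‖ξ‖ * (c * ‖u‖) := by ring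
    _ ≤ ‖ξ‖ * ‖adjoint A u‖ := by gcongr; exact hA u

lemma norm_sub_le_of_forall_norm_le (hc : 0 < c) (hA : ∀ u, c * ‖u‖ ≤ ‖adjoint A u‖)
    {β βhat : E} {ξ : F} (hmin : ∀ β', A β' = A β + ξ → ‖βhat‖ ≤ ‖β'‖) :
    ‖βhat - β‖ ≤ 2 * ‖β‖ + ‖ξ‖ / c := by
  obtain ⟨η, hη, hηξ⟩ := exists_apply_eq_and_mul_norm_le hc hA ξ
  calc ‖βhat - β‖ ≤ ‖βhat‖ + ‖β‖ := norm_sub_le _ _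
    _ ≤ ‖β + η‖ + ‖β‖ := by gcongr; exact hmin _ (by rw [map_add, hη])
    _ ≤ ‖β‖ + ‖η‖ + ‖β‖ := by gcongr; exact norm_add_le _ _
    _ ≤ 2 * ‖β‖ + ‖ξ‖ / c := by linarith [(le_div_iff₀' hc).2 hηξ]

/-- The properties of the design `A` on which the analysis of the minimum-norm interpolator rests.
The covariance has square root `D`, and `P` projects onto the span of its leading eigenvectors:
there `A` is bounded below by `a` in the prediction norm, on the remaining directions it is bounded
by `s`, and its adjoint is bounded below by `c`. -/
structure IsWellConditioned (A : E →L[ℝ] F) (D P : E →L[ℝ] E) (a s c : ℝ) : Prop where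
  mul_norm_le_norm_head : ∀ x, a * ‖D (P x)‖ ≤ ‖A (P x)‖
  norm_tail_le : ∀ x, ‖A (x - P x)‖ ≤ s * ‖x‖
  mul_norm_le_norm_adjoint : ∀ u, c * ‖u‖ ≤ ‖adjoint A u‖

namespace IsWellConditioned

lemma mul_norm_le (h : IsWellConditioned A D P a s c) (ha : 0 ≤ a)
    (hD : ∀ x, ‖D (x - P x)‖ ≤ t * ‖x‖) (x : E) :
    a * ‖D x‖ ≤ ‖A x‖ + (s + a * t) * ‖x‖ := by
  have hhead : ‖A (P x)‖ ≤ ‖A x‖ + ‖A (x - P x)‖ := by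
    simpa only [map_sub, sub_sub_cancel] using norm_sub_le (A x) (A (x - P x))
  have hsplit : ‖D x‖ ≤ ‖D (P x)‖ + ‖D (x - P x)‖ := by
    simpa only [map_sub, add_sub_cancel] using norm_add_le (D (P x)) (D (x - P x))
  calc a * ‖D x‖ ≤ a * ‖D (P x)‖ + a * ‖D (x - P x)‖ := by rw [← mul_add]; gcongr
    _ ≤ ‖A x‖ + s * ‖x‖ + a * (t * ‖x‖) := by
      gcongr
      · exact (h.mul_norm_le_norm_head x).trans (hhead.trans (by gcongr; exact h.norm_tail_le x))
      · exact hD x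
    _ = ‖A x‖ + (s + a * t) * ‖x‖ := by ring

lemma mul_norm_sub_le (h : IsWellConditioned A D P a s c) (ha : 0 ≤ a) (hs : 0 ≤ s) (hc : 0 < c)
    (ht : 0 ≤ t) (hD : ∀ x, ‖D (x - P x)‖ ≤ t * ‖x‖) {β βhat : E} {ξ : F}
    (hfit : A βhat = A β + ξ) (hmin : ∀ β', A β' = A β + ξ → ‖βhat‖ ≤ ‖β'‖) :
    a * ‖D (βhat - β)‖ ≤ ‖ξ‖ + (s + a * t) * (2 * ‖β‖ + ‖ξ‖ / c) := by
  refine (h.mul_norm_le ha hD (βhat - β)).trans ?_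
  rw [map_sub, hfit, add_sub_cancel_left]
  gcongr
  exact norm_sub_le_of_forall_norm_le hc h.mul_norm_le_norm_adjoint hmin

lemma norm_sub_sq_le {N r R : ℝ} (hN : 0 < N) (hr : 0 ≤ r) (hR : 0 < R) (hrR : r ≤ R)
    (h : IsWellConditioned A D P (√N / 4) (9 / 4 * √(9216 * r)) (√R / 4))
    (hD : ∀ x, ‖D (x - P x)‖ ≤ 16 * √r / √N * ‖x‖) {β βhat : E} {ξ : F}
    (hfit : A βhat = A β + ξ) (hmin : ∀ β', A β' = A β + ξ → ‖βhat‖ ≤ ‖β'‖) :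
    ‖D (βhat - β)‖ ^ 2 ≤ 5284 ^ 2 * max (‖β‖ ^ 2 * r / N) (‖ξ‖ ^ 2 / N) := by
  have hs : 9 / 4 * √(9216 * r) = 216 * √r := by
    rw [show 9216 * r = 96 ^ 2 * r by norm_num, sqrt_mul (by norm_num), sqrt_sq (by norm_num)]
    ring
  have ht : √N / 4 * (16 * √r / √N) = 4 * √r := by field_simp; norm_num
  have hratio : √r * (‖ξ‖ / (√R / 4)) ≤ 4 * ‖ξ‖ :=
    calc √r * (‖ξ‖ / (√R / 4)) ≤ √R * (‖ξ‖ / (√R / 4)) := by gcongr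
      _ = 4 * ‖ξ‖ := by field_simp
  have herr : √N * ‖D (βhat - β)‖ ≤ 5284 * max (√r * ‖β‖) ‖ξ‖ := by
    have hpred := h.mul_norm_sub_le (by positivity) (by positivity) (by positivity)
      (by positivity) hD hfit hmin
    rw [hs, ht] at hpred
    -- `5284 = 4 * ((216 + 4) * (2 + 4) + 1)`
    linarith [le_max_left (√r * ‖β‖) ‖ξ‖, le_max_right (√r * ‖β‖) ‖ξ‖]
  rw [max_div_div_right hN.le, ← mul_div_assoc, le_div_iff₀ hN]
  calc ‖D (βhat - β)‖ ^ 2 * N = (√N * ‖D (βhat - β)‖) ^ 2 := by rw [mul_pow, sq_sqrt hN.le]; ring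
    _ ≤ (5284 * max (√r * ‖β‖) ‖ξ‖) ^ 2 := by gcongr
    _ = 5284 ^ 2 * max (‖β‖ ^ 2 * r) (‖ξ‖ ^ 2) := by
      rw [mul_pow, (pow_left_monotoneOn (n := 2)).map_max (Set.mem_Ici.2 (by positivity))
        (Set.mem_Ici.2 (by positivity)), mul_pow, sq_sqrt hr, mul_comm r]

end IsWellConditioned

end MinimumNormInterpolation

section IllConditioned

open Real Module ContinuousLinearMap

variable {Ω ι E F : Type*} [MeasurableSpace Ω] {μ : Measure Ω}
  [Fintype ι] [NormedAddCommGroup E] [InnerProductSpace ℝ E] [FiniteDimensional ℝ E]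
  [NormedAddCommGroup F] [InnerProductSpace ℝ F] [FiniteDimensional ℝ F]
  {Z : Ω → E →L[ℝ] F} {σ : ι → ℝ} {S R : ℝ}

lemma isWellConditioned_comp_diagOp [DecidableEq ι] {A : E →L[ℝ] F} (b : OrthonormalBasis ι ℝ E)
    {H K : Finset ι} {a s c : ℝ}
    (hhead : ∀ v ∈ Submodule.span ℝ (H.image b : Set E), a * ‖v‖ ≤ ‖A v‖)
    (htail : ∀ x, ‖A (diagOp b (((Hᶜ : Finset ι) : Set ι).indicator σ) x)‖ ≤ s * ‖x‖)
    (hfull : ∀ u, c * ‖u‖ ≤ ‖diagOp b ((K : Set ι).indicator σ) (adjoint A u)‖) :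
    IsWellConditioned (A ∘L diagOp b σ) (diagOp b σ) (diagOp b ((H : Set ι).indicator 1))
      a s c where
  mul_norm_le_norm_head x := by
    rw [ContinuousLinearMap.comp_apply, diagOp_diagOp_indicator_one]
    exact hhead _ (diagOp_indicator_mem_span b σ H x)
  norm_tail_le x := by
    rw [ContinuousLinearMap.comp_apply, sub_diagOp_indicator_one, diagOp_diagOp_indicator_one,
      ← Finset.coe_compl]
    exact htail x
  mul_norm_le_norm_adjoint u := by
    rw [adjoint_comp, adjoint_diagOp]
    refine (hfull u).trans (norm_diagOp_le_norm_diagOp b (fun i => ?_) _)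
    by_cases hi : i ∈ K <;> simp [hi]

lemma HasGaussianImages.measure_exists_mem_norm_lt_le [MeasurableSpace F] [BorelSpace F]
    (hZ : HasGaussianImages Z μ) (hF : 0 < finrank ℝ F) (V : Submodule ℝ E)
    (hV : 48 * finrank ℝ V ≤ finrank ℝ F) :
    μ {ω | ∃ v ∈ V, ‖Z ω v‖ < √(finrank ℝ F) / 4 * ‖v‖} ≤
      2 * ENNReal.ofReal (rexp (-(finrank ℝ F) / 16)) := by
  have hZV : HasGaussianImages (fun ω => Z ω ∘L V.subtypeL) μ := fun v hv => hZ v hv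
  have hbound := hZV.measure_exists_norm_diagOp_lt_le (stdOrthonormalBasis ℝ F) (σ := 1)
    (T := finrank ℝ F) (S := finrank ℝ F) (by exact_mod_cast hF) (by exact_mod_cast hF)
    (by exact_mod_cast hV) (by simp) (by simp)
  simpa [diagOp_one] using hbound

lemma measure_exists_lt_norm_apply_diagOp_le [MeasurableSpace E] [BorelSpace E]
    (hZ : HasGaussianImages (fun ω => adjoint (Z ω)) μ) (hF : 0 < finrank ℝ F)
    (b : OrthonormalBasis ι ℝ E) (hσ : ∀ i, σ i ^ 2 * (48 * finrank ℝ F) ≤ S)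
    (hsum : ∑ i, σ i ^ 2 ≤ S) :
    μ {ω | ∃ x, 9 / 4 * √S * ‖x‖ < ‖Z ω (diagOp b σ x)‖} ≤
      ENNReal.ofReal (rexp (-(48 * finrank ℝ F) / 16)) := by
  refine (measure_mono ?_).trans
    (hZ.measure_lt_opNorm_diagOp_comp_le b (by positivity) le_rfl hσ hsum)
  rintro ω ⟨x, hx⟩
  by_contra! h
  refine hx.not_ge ?_
  have hnorm : ‖Z ω ∘L diagOp b σ‖ ≤ 9 / 4 * √S := by
    rw [← adjoint.norm_map, adjoint_comp, adjoint_diagOp]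
    simpa using h
  exact (Z ω ∘L diagOp b σ).le_of_opNorm_le hnorm x

lemma measure_not_isWellConditioned_le [DecidableEq ι] [MeasurableSpace E] [BorelSpace E]
    [MeasurableSpace F] [BorelSpace F] (hZ : HasGaussianImages Z μ)
    (hZ' : HasGaussianImages (fun ω => adjoint (Z ω)) μ) (hF : 0 < finrank ℝ F)
    (b : OrthonormalBasis ι ℝ E) {H K : Finset ι} (hH : 48 * #H ≤ finrank ℝ F)
    (hσH : ∀ i ∈ Hᶜ, σ i ^ 2 * (48 * finrank ℝ F) ≤ S) (hsumH : ∑ i ∈ Hᶜ, σ i ^ 2 ≤ S)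
    (hR : 0 < R) (hσK : ∀ i ∈ K, σ i ^ 2 * (48 * finrank ℝ F) ≤ R)
    (hsumK : ∑ i ∈ K, σ i ^ 2 = R) :
    μ {ω | ¬ IsWellConditioned (Z ω ∘L diagOp b σ) (diagOp b σ)
        (diagOp b ((H : Set ι).indicator 1)) (√(finrank ℝ F) / 4) (9 / 4 * √S) (√R / 4)} ≤
      5 * ENNReal.ofReal (rexp (-(finrank ℝ F) / 16)) := by
  let V : Submodule ℝ E := Submodule.span ℝ (H.image b : Set E)
  let σH := ((Hᶜ : Finset ι) : Set ι).indicator σ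
  let σK := (K : Set ι).indicator σ
  let head : Set Ω := {ω | ∃ v ∈ V, ‖Z ω v‖ < √(finrank ℝ F) / 4 * ‖v‖}
  let tail : Set Ω := {ω | ∃ x, 9 / 4 * √S * ‖x‖ < ‖Z ω (diagOp b σH x)‖}
  let full : Set Ω := {ω | ∃ u, ‖diagOp b σK (adjoint (Z ω) u)‖ < √R / 4 * ‖u‖}
  let e := ENNReal.ofReal (rexp (-(finrank ℝ F) / 16))
  have hS : 0 ≤ S := (Finset.sum_nonneg fun i _ => sq_nonneg (σ i)).trans hsumH
  have hV : 48 * finrank ℝ V ≤ finrank ℝ F :=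
    (Nat.mul_le_mul_left 48 ((finrank_span_finset_le_card _).trans Finset.card_image_le)).trans hH
  have he : ENNReal.ofReal (rexp (-(48 * finrank ℝ F) / 16)) ≤ e :=
    ENNReal.ofReal_le_ofReal (exp_le_exp.2 (by linarith [(finrank ℝ F).cast_nonneg (α := ℝ)]))
  have hhead : μ head ≤ 2 * e := hZ.measure_exists_mem_norm_lt_le hF V hV
  have htail : μ tail ≤ e := (measure_exists_lt_norm_apply_diagOp_le hZ' hF b
    (indicator_sq_mul_le hσH hS) ((sum_indicator_sq σ _).trans_le hsumH)).trans he
  have hfull : μ full ≤ 2 * e := (hZ'.measure_exists_norm_diagOp_lt_le b (by positivity) hR le_rfl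
    (indicator_sq_mul_le hσK hR.le) ((sum_indicator_sq σ K).trans hsumK)).trans (by gcongr)
  calc μ _ ≤ μ (head ∪ tail ∪ full) := measure_mono fun ω hω => by
        contrapose! hω
        simp only [head, tail, full, Set.mem_union, Set.mem_ofPred_eq, not_or, not_exists, not_and,
          not_lt] at hω
        exact not_not.2 (isWellConditioned_comp_diagOp b hω.1.1 hω.1.2 hω.2)
    _ ≤ μ head + μ tail + μ full :=
      (measure_union_le _ _).trans (by gcongr; exact measure_union_le _ _)
    _ ≤ 2 * e + e + 2 * e := by gcongr
    _ = 5 * e := by ring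

end IllConditioned

section Model

open Real Module

lemma isClosed_setOf_isWellConditioned_rowOp {I J : Type*} [Fintype I] [Fintype J]
    (D P : EuclideanSpace ℝ J →L[ℝ] EuclideanSpace ℝ J) (a s c : ℝ) :
    IsClosed {x : I → J → ℝ | IsWellConditioned (rowOp x) D P a s c} := by
  have hadj (u : EuclideanSpace ℝ I) : Continuous fun x : I → J → ℝ => (rowOp x).adjoint u := by
    simp only [adjoint_rowOp]
    exact (continuous_rowOp_apply u).comp (by fun_prop)
  have hset : {x : I → J → ℝ | IsWellConditioned (rowOp x) D P a s c} =
      (⋂ v, {x | a * ‖D (P v)‖ ≤ ‖rowOp x (P v)‖}) ∩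
        ((⋂ v, {x | ‖rowOp x (v - P v)‖ ≤ s * ‖v‖}) ∩
          ⋂ u, {x | c * ‖u‖ ≤ ‖(rowOp x).adjoint u‖}) := by
    ext x
    simp only [Set.mem_inter_iff, Set.mem_iInter]
    exact ⟨fun h => ⟨h.1, h.2, h.3⟩, fun h => ⟨h.1, h.2.1, h.2.2⟩⟩
  rw [hset]
  have hhead : IsClosed (⋂ v, {x : I → J → ℝ | a * ‖D (P v)‖ ≤ ‖rowOp x (P v)‖}) :=
    isClosed_iInter fun _ => isClosed_le continuous_const (continuous_rowOp_apply _).norm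
  have htail : IsClosed (⋂ v, {x : I → J → ℝ | ‖rowOp x (v - P v)‖ ≤ s * ‖v‖}) :=
    isClosed_iInter fun _ => isClosed_le (continuous_rowOp_apply _).norm continuous_const
  have hadjoint : IsClosed (⋂ u, {x : I → J → ℝ | c * ‖u‖ ≤ ‖(rowOp x).adjoint u‖}) :=
    isClosed_iInter fun u => isClosed_le continuous_const (hadj u).norm
  exact hhead.inter (htail.inter hadjoint)

section ColumnBasis

variable {ι : Type*} [Fintype ι] [DecidableEq ι] {Q : Matrix ι ι ℝ}

lemma orthonormal_transpose (hQ : Q * Qᵀ = 1) :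
    Orthonormal ℝ fun i => (WithLp.toLp 2 (Qᵀ i) : EuclideanSpace ℝ ι) := by
  rw [orthonormal_iff_ite]
  intro i j
  have hij : (Qᵀ * Q) i j = (1 : Matrix ι ι ℝ) i j := by rw [mul_eq_one_comm.1 hQ]
  rw [mul_apply, one_apply] at hij
  rw [← hij, PiLp.inner_apply]
  exact Finset.sum_congr rfl fun k _ => by simp [mul_comm]

/-- The orthonormal basis formed by the columns of an orthogonal matrix; for the eigenvector matrix
of the covariance this is the eigenbasis. -/
def columnBasis (hQ : Q * Qᵀ = 1) : OrthonormalBasis ι ℝ (EuclideanSpace ℝ ι) :=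
  OrthonormalBasis.mk (orthonormal_transpose hQ)
    ((orthonormal_transpose hQ).linearIndependent.span_eq_top_of_card_eq_finrank'
      finrank_euclideanSpace.symm).ge

lemma columnBasis_apply (hQ : Q * Qᵀ = 1) (i : ι) : columnBasis hQ i = WithLp.toLp 2 (Qᵀ i) := by
  simp [columnBasis]

lemma toLp_mul_diagonal_mul_transpose_mulVec (hQ : Q * Qᵀ = 1) (σ v : ι → ℝ) :
    WithLp.toLp 2 ((Q * diagonal σ * Qᵀ) *ᵥ v) = diagOp (columnBasis hQ) σ (WithLp.toLp 2 v) := by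
  ext k
  rw [diagOp_apply, ← mulVec_mulVec, ← mulVec_mulVec]
  simp only [columnBasis_apply, mulVec, dotProduct, PiLp.inner_apply, WithLp.ofLp_sum,
    Finset.sum_apply]
  refine Finset.sum_congr rfl fun i _ => ?_
  simp [diagonal_apply, mul_comm]

lemma rowOp_mulVec {I : Type*} [Fintype I] (hQ : Q * Qᵀ = 1) (σ : ι → ℝ) (g : I → ι → ℝ) :
    rowOp (fun i => (Q * diagonal σ * Qᵀ) *ᵥ g i) = rowOp g ∘L diagOp (columnBasis hQ) σ := by
  have hinner (x : I → ι → ℝ) (v : EuclideanSpace ℝ ι) (i : I) :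
      rowOp x v i = inner ℝ (WithLp.toLp 2 (x i)) v := by
    simp [rowOp_apply, PiLp.inner_apply, mul_comm]
  ext v i
  rw [hinner, toLp_mul_diagonal_mul_transpose_mulVec hQ, ContinuousLinearMap.comp_apply, hinner,
    ← ContinuousLinearMap.adjoint_inner_left, adjoint_diagOp]

end ColumnBasis

lemma enorm2_eq_norm {m : ℕ} (v : Fin m → ℝ) : enorm2 v = ‖WithLp.toLp 2 v‖ := by
  simp [enorm2, EuclideanSpace.norm_eq]

lemma predNorm_eq_norm_diagOp {p : ℕ} {Q : Matrix (Fin p) (Fin p) ℝ} (hQ : Q * Qᵀ = 1)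
    {w : Fin p → ℝ} (hw : ∀ i, 0 ≤ w i) (d : Fin p → ℝ) :
    predNorm (Q * diagonal w * Qᵀ) d =
      ‖diagOp (columnBasis hQ) (fun i => √(w i)) (WithLp.toLp 2 d)‖ := by
  have hinner : d ⬝ᵥ (Q * diagonal w * Qᵀ) *ᵥ d =
      inner ℝ (diagOp (columnBasis hQ) w (WithLp.toLp 2 d)) (WithLp.toLp 2 d) := by
    rw [← toLp_mul_diagonal_mul_transpose_mulVec, EuclideanSpace.inner_toLp_toLp, star_trivial]
  rw [predNorm, ← sqrt_sq (norm_nonneg (diagOp _ _ _)), hinner, norm_diagOp_sq, diagOp_apply,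
    sum_inner]
  simp only [real_inner_smul_left, sq_sqrt (hw _), mul_assoc, ← sq]

variable {n p : ℕ} {lam : ℕ → ℝ} {Q : Matrix (Fin p) (Fin p) ℝ}

lemma pi_mvGaussian_eq_map : (Measure.pi fun _ : Fin n => mvGaussian p lam Q) =
    (gaussianArray (Fin n) (Fin p)).map fun g i => covHalf p lam Q *ᵥ g i := by
  have hcov : Measurable fun v => covHalf p lam Q *ᵥ v := by unfold mulVec dotProduct; fun_prop
  unfold mvGaussian _root_.stdGaussian gaussianArray
  exact (Measure.pi_map_pi (f := fun _ v => covHalf p lam Q *ᵥ v) fun _ => hcov.aemeasurable).symm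

lemma IsMinInterp.rowOp_eq {x : Fin n → Fin p → ℝ} {Y : Fin n → ℝ} {β : Fin p → ℝ}
    (h : IsMinInterp x Y β) : rowOp x (WithLp.toLp 2 β) = WithLp.toLp 2 Y := by
  ext i
  exact h.1 i

lemma IsMinInterp.norm_le {x : Fin n → Fin p → ℝ} {Y : Fin n → ℝ} {β : Fin p → ℝ}
    (h : IsMinInterp x Y β) {β' : EuclideanSpace ℝ (Fin p)} (hβ' : rowOp x β' = WithLp.toLp 2 Y) :
    ‖WithLp.toLp 2 β‖ ≤ ‖β'‖ := by
  rw [← β'.toLp_ofLp, ← enorm2_eq_norm, ← enorm2_eq_norm]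
  exact h.2 β'.ofLp fun i => congrArg (· i) hβ'

end Model

section Spectrum

variable {p : ℕ} {lam : ℕ → ℝ} {k l m : ℕ}

/-- The coordinates `j` whose eigenvalue `λ_{j+1}` enters the tail sum `r_k`: coordinates are
numbered from `0`, eigenvalues from `1`. -/
def tailIndices (p k : ℕ) : Finset (Fin p) := {j | k ≤ (j : ℕ) + 1}

lemma mem_tailIndices {j : Fin p} : j ∈ tailIndices p k ↔ k ≤ (j : ℕ) + 1 := by
  simp [tailIndices]

lemma card_compl_tailIndices_le : #(tailIndices p k)ᶜ ≤ k := by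
  have hsub : (tailIndices p k)ᶜ ⊆ ({j | (j : ℕ) < k} : Finset (Fin p)) := fun j hj => by
    rw [Finset.mem_compl, mem_tailIndices] at hj
    rw [Finset.mem_filter_univ]
    omega
  exact (Finset.card_le_card hsub).trans (Fin.card_filter_val_lt.trans_le (min_le_right _ _))

lemma sum_tailIndices_eq_rsum (lam : ℕ → ℝ) (hk : 1 ≤ k) :
    ∑ j ∈ tailIndices p k, lam ((j : ℕ) + 1) = rsum p lam k := by
  refine Finset.sum_bij (fun (j : Fin p) _ => (j : ℕ) + 1) (fun j hj => ?_) (fun a _ b _ hab => ?_)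
    (fun i hi => ?_) (fun _ _ => rfl)
  · rw [mem_tailIndices] at hj
    rw [Finset.mem_Icc]
    omega
  · exact Fin.ext (by omega)
  · rw [Finset.mem_Icc] at hi
    exact ⟨⟨i - 1, by omega⟩, by rw [mem_tailIndices]; simp only; omega, by simp only; omega⟩

lemma rsum_nonneg (hlam : ∀ k, 1 ≤ k → k ≤ p → 0 ≤ lam k) (hk : 1 ≤ k) : 0 ≤ rsum p lam k :=
  Finset.sum_nonneg fun i hi => by
    rw [Finset.mem_Icc] at hi
    exact hlam i (hk.trans hi.1) hi.2

lemma rsum_anti (hlam : ∀ k, 1 ≤ k → k ≤ p → 0 ≤ lam k) (hk : 1 ≤ k) (hkl : k ≤ l) :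
    rsum p lam l ≤ rsum p lam k := by
  refine Finset.sum_le_sum_of_subset_of_nonneg (Finset.Icc_subset_Icc_left hkl) fun i hi _ => ?_
  rw [Finset.mem_Icc] at hi
  exact hlam i (hk.trans hi.1) hi.2

lemma mul_le_rsum (hlam : ∀ k, 1 ≤ k → k ≤ p → 0 ≤ lam k)
    (hanti : ∀ j k, 1 ≤ j → j ≤ k → k ≤ p → lam k ≤ lam j) (hk : 1 ≤ k) (hkm : 2 * k ≤ m)
    (hmp : m ≤ p) : k * lam m ≤ rsum p lam k := by
  calc k * lam m ≤ ((m + 1 - k : ℕ) : ℝ) * lam m := by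
        gcongr
        · exact hlam m (by omega) hmp
        · omega
    _ = ∑ _i ∈ Finset.Icc k m, lam m := by simp
    _ ≤ ∑ i ∈ Finset.Icc k m, lam i := Finset.sum_le_sum fun i hi => by
        rw [Finset.mem_Icc] at hi
        exact hanti i m (by omega) hi.2 hmp
    _ ≤ rsum p lam k :=
        Finset.sum_le_sum_of_subset_of_nonneg (Finset.Icc_subset_Icc_right hmp) fun i hi _ => by
          rw [Finset.mem_Icc] at hi
          exact hlam i (hk.trans hi.1) hi.2

variable {n : ℕ} {c0 : ℝ}

lemma mul_le_of_mem_tailIndices (hlam : ∀ k, 1 ≤ k → k ≤ p → 0 ≤ lam k)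
    (hanti : ∀ j k, 1 ≤ j → j ≤ k → k ≤ p → lam k ≤ lam j) (hn : 0 < n)
    (hl : (n : ℝ) ≤ 192 * l) {j : Fin p} (hj : j ∈ tailIndices p (2 * l)) :
    lam ((j : ℕ) + 1) * n ≤ 192 * rsum p lam l := by
  have hl1 : 1 ≤ l := by
    have : (0 : ℝ) < l := by linarith [(Nat.cast_pos (α := ℝ)).2 hn]
    exact_mod_cast this
  calc lam ((j : ℕ) + 1) * n ≤ lam ((j : ℕ) + 1) * (192 * l) := by
        gcongr
        exact hlam _ (by omega) (by omega)
    _ = 192 * (l * lam ((j : ℕ) + 1)) := by ring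
    _ ≤ 192 * rsum p lam l := by
        gcongr
        exact mul_le_rsum hlam hanti hl1 (mem_tailIndices.1 hj) (by omega)

lemma kstar_mem (hne : (kstarSet p lam c0 n).Nonempty) :
    kstar p lam c0 n ∈ kstarSet p lam c0 n := Nat.sInf_mem hne

lemma pos_of_mem_kstarSet (hlam : ∀ k, 1 ≤ k → k ≤ p → 0 ≤ lam k) (hcn : 0 < c0 * n)
    (hk : k ∈ kstarSet p lam c0 n) : 0 < lam k := by
  obtain ⟨hk1, hkp, hkr⟩ := hk
  refine (hlam k hk1 hkp).lt_of_ne fun h => ?_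
  rw [← h, div_zero] at hkr
  exact hcn.not_ge hkr

lemma mul_le_rsum_of_mem_kstarSet (hlam : ∀ k, 1 ≤ k → k ≤ p → 0 ≤ lam k)
    (hanti : ∀ j k, 1 ≤ j → j ≤ k → k ≤ p → lam k ≤ lam j) (hcn : 0 < c0 * n)
    (hk : k ∈ kstarSet p lam c0 n) (hkm : k ≤ m) (hmp : m ≤ p) :
    lam m * (c0 * n) ≤ rsum p lam k := by
  have hkr := (le_div_iff₀ (pos_of_mem_kstarSet hlam hcn hk)).1 hk.2.2
  calc lam m * (c0 * n) ≤ lam k * (c0 * n) := by gcongr; exact hanti k m hk.1 hkm hmp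
    _ ≤ rsum p lam k := by rwa [mul_comm]

lemma rsum_pos_of_mem_kstarSet (hlam : ∀ k, 1 ≤ k → k ≤ p → 0 ≤ lam k)
    (hanti : ∀ j k, 1 ≤ j → j ≤ k → k ≤ p → lam k ≤ lam j) (hcn : 0 < c0 * n)
    (hk : k ∈ kstarSet p lam c0 n) : 0 < rsum p lam k :=
  (mul_pos (pos_of_mem_kstarSet hlam hcn hk) hcn).trans_le
    (mul_le_rsum_of_mem_kstarSet hlam hanti hcn hk le_rfl hk.2.1)

end Spectrum

section Design

open Real

variable {n p : ℕ} {lam : ℕ → ℝ} {Q : Matrix (Fin p) (Fin p) ℝ}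

/-- The operator `Σ^{1/2}` in the eigenbasis given by the columns of `Q`. -/
def covHalfOp (lam : ℕ → ℝ) (hQ : Q * Qᵀ = 1) :
    EuclideanSpace ℝ (Fin p) →L[ℝ] EuclideanSpace ℝ (Fin p) :=
  diagOp (columnBasis hQ) fun j => √(lam ((j : ℕ) + 1))

/-- The orthogonal projection onto the span of the eigenvectors with (`1`-based) index below `m`. -/
def headProj (hQ : Q * Qᵀ = 1) (m : ℕ) :
    EuclideanSpace ℝ (Fin p) →L[ℝ] EuclideanSpace ℝ (Fin p) :=
  diagOp (columnBasis hQ) ((((tailIndices p m)ᶜ : Finset (Fin p)) : Set (Fin p)).indicator 1)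

lemma norm_covHalfOp_sub_headProj_le (hQ : Q * Qᵀ = 1) {m : ℕ} {t : ℝ} (ht : 0 ≤ t)
    (htail : ∀ j ∈ tailIndices p m, lam ((j : ℕ) + 1) ≤ t ^ 2)
    (x : EuclideanSpace ℝ (Fin p)) : ‖covHalfOp lam hQ (x - headProj hQ m x)‖ ≤ t * ‖x‖ := by
  rw [headProj, sub_diagOp_indicator_one, covHalfOp, diagOp_diagOp_indicator_one]
  refine norm_diagOp_le _ ht (fun j => ?_) x
  by_cases hj : j ∈ tailIndices p m
  · simpa [hj, abs_of_nonneg] using (sqrt_le_left ht).2 (htail j hj)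
  · simpa [hj] using ht

lemma measure_not_isWellConditioned_rowOp_le {Ω : Type*} [MeasurableSpace Ω] {μ : Measure Ω}
    {X : Ω → Fin n → Fin p → ℝ} (hX : μ.map X = Measure.pi fun _ => mvGaussian p lam Q)
    (hQ : Q * Qᵀ = 1) (D P : EuclideanSpace ℝ (Fin p) →L[ℝ] EuclideanSpace ℝ (Fin p))
    (a s c : ℝ) :
    μ {ω | ¬ IsWellConditioned (rowOp (X ω)) D P a s c} ≤
      gaussianArray (Fin n) (Fin p)
        {g | ¬ IsWellConditioned (rowOp g ∘L covHalfOp lam hQ) D P a s c} := by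
  have hcov : Measurable fun (g : Fin n → Fin p → ℝ) i => covHalf p lam Q *ᵥ g i := by
    unfold mulVec dotProduct; fun_prop
  have hXmap := hX.trans pi_mvGaussian_eq_map
  have : IsProbabilityMeasure (μ.map X) := by
    rw [hXmap]
    exact Measure.isProbabilityMeasure_map hcov.aemeasurable
  have hXm : AEMeasurable X μ := .of_map_ne_zero (IsProbabilityMeasure.ne_zero _)
  refine (Measure.le_map_apply hXm
    {x | ¬ IsWellConditioned (rowOp x) D P a s c}).trans_eq ?_
  rw [hXmap]
  refine (Measure.map_apply hcov
    (isClosed_setOf_isWellConditioned_rowOp D P a s c).measurableSet.compl).trans ?_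
  congr 1
  ext g
  change ¬ IsWellConditioned (rowOp fun i => covHalf p lam Q *ᵥ g i) D P a s c ↔ _
  rw [covHalf, rowOp_mulVec hQ]
  rfl

lemma measure_not_isWellConditioned_design_le {Ω : Type*} [MeasurableSpace Ω] {P : Measure Ω}
    {X : Ω → Fin n → Fin p → ℝ} (hX : P.map X = Measure.pi fun _ => mvGaussian p lam Q)
    (hQ : Q * Qᵀ = 1) (hlam : ∀ k, 1 ≤ k → k ≤ p → 0 ≤ lam k)
    (hanti : ∀ j k, 1 ≤ j → j ≤ k → k ≤ p → lam k ≤ lam j) (hn : 0 < n) {k l : ℕ}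
    (hk : k ∈ kstarSet p lam 48 n) (hkl : k ≤ l) (hl : (n : ℝ) ≤ 192 * l)
    (hl' : 96 * (l : ℝ) ≤ n) :
    P {ω | ¬ IsWellConditioned (rowOp (X ω)) (covHalfOp lam hQ) (headProj hQ (2 * l)) (√n / 4)
        (9 / 4 * √(9216 * rsum p lam l)) (√(rsum p lam k) / 4)} ≤
      ENNReal.ofReal (5 * rexp (-(1 / 16) * n)) := by
  have hcn : 0 < 48 * (n : ℝ) := by positivity
  have hsq (j : Fin p) : √(lam ((j : ℕ) + 1)) ^ 2 = lam ((j : ℕ) + 1) :=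
    sq_sqrt (hlam _ (by omega) (by omega))
  have hl1 : 1 ≤ l := hk.1.trans hkl
  have hrk : 0 < rsum p lam k := rsum_pos_of_mem_kstarSet hlam hanti hcn hk
  have hcard : 48 * #(tailIndices p (2 * l))ᶜ ≤ n := by
    have : 96 * l ≤ n := by exact_mod_cast hl'
    linarith [card_compl_tailIndices_le (p := p) (k := 2 * l)]
  refine (measure_not_isWellConditioned_rowOp_le hX hQ _ _ _ _ _).trans ?_
  have hbound := measure_not_isWellConditioned_le
    (hasGaussianImages_rowOp (I := Fin n) (J := Fin p)) hasGaussianImages_adjoint_rowOp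
    (by simpa using hn) (columnBasis hQ)
    (σ := fun j : Fin p => √(lam ((j : ℕ) + 1)))
    (H := (tailIndices p (2 * l))ᶜ) (K := tailIndices p k) (S := 9216 * rsum p lam l)
    (R := rsum p lam k) (by simpa using hcard)
    (fun j hj => ?_) ?_ hrk (fun j hj => ?_) ?_
  · rw [ENNReal.ofReal_mul (by norm_num), ENNReal.ofReal_ofNat,
      show -(1 / 16) * (n : ℝ) = -n / 16 by ring]
    simpa only [finrank_euclideanSpace_fin, covHalfOp, headProj] using hbound
  · rw [compl_compl] at hj
    rw [hsq, finrank_euclideanSpace_fin]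
    linarith [mul_le_of_mem_tailIndices hlam hanti hn hl hj]
  · simp only [compl_compl, hsq]
    rw [sum_tailIndices_eq_rsum lam (by omega)]
    linarith [rsum_nonneg hlam hl1, rsum_anti hlam hl1 (show l ≤ 2 * l by omega)]
  · rw [hsq, finrank_euclideanSpace_fin]
    exact mul_le_rsum_of_mem_kstarSet hlam hanti hcn hk (mem_tailIndices.1 hj) (by omega)
  · simp only [hsq]
    exact sum_tailIndices_eq_rsum lam hk.1

lemma IsMinInterp.predNorm_sub_sq_le {x : Fin n → Fin p → ℝ} {ξ : Fin n → ℝ} {β βhat : Fin p → ℝ}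
    (hβhat : IsMinInterp x (fun i => (∑ j, x i j * β j) + ξ i) βhat) (hQ : Q * Qᵀ = 1)
    (hlam : ∀ k, 1 ≤ k → k ≤ p → 0 ≤ lam k)
    (hanti : ∀ j k, 1 ≤ j → j ≤ k → k ≤ p → lam k ≤ lam j) (hn : 0 < n) {k l : ℕ}
    (hk : k ∈ kstarSet p lam 48 n) (hkl : k ≤ l) (hl : (n : ℝ) ≤ 192 * l)
    (hx : IsWellConditioned (rowOp x) (covHalfOp lam hQ) (headProj hQ (2 * l)) (√n / 4)
        (9 / 4 * √(9216 * rsum p lam l)) (√(rsum p lam k) / 4)) :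
    predNorm (Q * diagonal (fun i : Fin p => lam ((i : ℕ) + 1)) * Qᵀ) (fun j => βhat j - β j) ^ 2 ≤
      5284 ^ 2 * max (enorm2 β ^ 2 * rsum p lam l / n) (enorm2 ξ ^ 2 / n) := by
  have hn' : (0 : ℝ) < n := by exact_mod_cast hn
  have hcn : 0 < 48 * (n : ℝ) := by positivity
  have hlam' (j : Fin p) : 0 ≤ lam ((j : ℕ) + 1) := hlam _ (by omega) (by omega)
  have hrk : 0 < rsum p lam k := rsum_pos_of_mem_kstarSet hlam hanti hcn hk
  have hrl : 0 ≤ rsum p lam l := rsum_nonneg hlam (hk.1.trans hkl)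
  have htail (v : EuclideanSpace ℝ (Fin p)) : ‖covHalfOp lam hQ (v - headProj hQ (2 * l) v)‖ ≤
      16 * √(rsum p lam l) / √n * ‖v‖ :=
    norm_covHalfOp_sub_headProj_le hQ (by positivity) (fun j hj => by
      rw [div_pow, mul_pow, sq_sqrt hrl, sq_sqrt hn'.le, le_div_iff₀ hn']
      linarith [mul_le_of_mem_tailIndices hlam hanti hn hl hj]) v
  have hmodel : rowOp x (WithLp.toLp 2 β) + WithLp.toLp 2 ξ =
      WithLp.toLp 2 fun i => (∑ j, x i j * β j) + ξ i := rfl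
  rw [predNorm_eq_norm_diagOp hQ hlam', enorm2_eq_norm, enorm2_eq_norm]
  exact hx.norm_sub_sq_le hn' hrl hrk (rsum_anti hlam hk.1 hkl) htail
    (hmodel ▸ hβhat.rowOp_eq) fun β' hβ' => hβhat.norm_le (hβ'.trans hmodel)

lemma ofReal_one_sub_le_measure {Ω : Type*} [MeasurableSpace Ω] {P : Measure Ω}
    [IsProbabilityMeasure P] {s : Set Ω} {e : ℝ} (he : 0 ≤ e) (hs : P sᶜ ≤ ENNReal.ofReal e) :
    ENNReal.ofReal (1 - e) ≤ P s := by
  rw [ENNReal.ofReal_sub _ he, ENNReal.ofReal_one, tsub_le_iff_right, ← measure_univ (μ := P)]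
  exact (measure_univ_le_add_compl s).trans (by gcongr)

end Design

/-- Corollary 1: in the model `Y = Xβ* + ξ` with `p ≥ n` and
`k* ≤ c n`, there are absolute constants `c', c₁, c₂, C > 0` such that with probability
at least `1 - c₁ e^{-c₂ n}` the minimum `ℓ2`-norm interpolator satisfies
`‖Σ^{1/2}(β̂ - β*)‖₂² ≤ C max( ‖β*‖₂² r_{c'n}(Σ)/n , ‖ξ‖₂²/n )`. -/
theorem stmt2 :
    ∃ c0 > (0 : ℝ), ∃ c > (0 : ℝ), ∃ c' > (0 : ℝ),
    ∃ c1 > (0 : ℝ), ∃ c2 > (0 : ℝ), ∃ C > (0 : ℝ),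
    ∀ (n p : ℕ), 0 < n → n ≤ p →
    ∀ (lam : ℕ → ℝ) (Porth Sig : Matrix (Fin p) (Fin p) ℝ),
      (∀ k, 1 ≤ k → k ≤ p → 0 ≤ lam k) →
      (∀ j k, 1 ≤ j → j ≤ k → k ≤ p → lam k ≤ lam j) →
      Porth * Porthᵀ = 1 →
      Sig = Porth * Matrix.diagonal (fun i : Fin p => lam ((i : ℕ) + 1)) * Porthᵀ →
      n ≤ Sig.rank →
    ∀ (Ω : Type) (_ : MeasurableSpace Ω) (P : Measure Ω), IsProbabilityMeasure P →
    ∀ (X : Ω → Fin n → Fin p → ℝ) (ξ : Ω → Fin n → ℝ) (βstar : Fin p → ℝ)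
      (βhat : Ω → Fin p → ℝ),
      Measure.map X P = (Measure.pi fun _ : Fin n => mvGaussian p lam Porth) →
      (∀ᵐ ω ∂P, IsMinInterp (X ω)
        (fun i => (∑ j, X ω i j * βstar j) + ξ ω i) (βhat ω)) →
      (kstarSet p lam c0 n).Nonempty → (kstar p lam c0 n : ℝ) ≤ c * n →
      ENNReal.ofReal (1 - c1 * Real.exp (-c2 * n)) ≤
        P {ω | predNorm Sig (fun j => βhat ω j - βstar j) ^ 2 ≤
               C * max (enorm2 βstar ^ 2 * rsum p lam (Nat.ceil (c' * n)) / n)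
                       (enorm2 (ξ ω) ^ 2 / n)} := by
  refine ⟨48, by norm_num, 1 / 192, by norm_num, 1 / 192, by norm_num, 5, by norm_num, 1 / 16,
    by norm_num, 5284 ^ 2, by norm_num, ?_⟩
  intro n p hn _ lam Q Sig hlam hanti hQ hSig _ Ω _ P _ X ξ βstar βhat hX hβhat hne hk
  set l := ⌈1 / 192 * (n : ℝ)⌉₊
  have hmem := kstar_mem hne
  have hkl : kstar p lam 48 n ≤ l := by exact_mod_cast hk.trans (Nat.le_ceil _)
  have hl : (n : ℝ) ≤ 192 * l := by linarith [Nat.le_ceil (1 / 192 * (n : ℝ))]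
  have hl' : 96 * (l : ℝ) ≤ n := by
    have hk1 : (1 : ℝ) ≤ kstar p lam 48 n := by exact_mod_cast hmem.1
    linarith [Nat.ceil_lt_add_one (a := 1 / 192 * (n : ℝ)) (by positivity)]
  refine ofReal_one_sub_le_measure (by positivity) ((measure_mono_ae ?_).trans
    (measure_not_isWellConditioned_design_le hX hQ hlam hanti hn hmem hkl hl hl'))
  filter_upwards [hβhat] with ω hmin
  exact mt fun hgood => hSig ▸ hmin.predNorm_sub_sq_le hQ hlam hanti hn hmem hkl hl hgood
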